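/- Let K ≥ 1 be an integer, ν > 0, and let S be a nonempty finite set of at most K items, where item j has utility û_j ≥ 0 and a scalar feature x_j ∈ ℝ with |x_j| ≤ ν. Let U = max{1, max_{j∈S} û_j}, fix ε₀ ∈ (0, 1/2], and set Δ = ε₀·U/K. For each j ∈ S let μ_j = round(û_j/Δ)·Δ, α_j = round(û_j x_j/Δ)·Δ and β_j = round(û_j x_j²/Δ)·Δ, where round(x) denotes a nearest integer to x. Define CI(S) = sqrt( (Σ û_j x_j²)/(1+Σ û_j) − ((Σ û_j x_j)/(1+Σ û_j))² ) and CÎ(S) = sqrt( max{0, (Σ β_j)/(1+Σ μ_j) − ((Σ α_j)/(1+Σ μ_j))² } ), all sums over j ∈ S. Then |CI(S) − CÎ(S)| ≤ sqrt(24·ε₀)·(1 + ν). (Discretization error bound for the univariate confidence-width term; second part of Lemma 8 of the paper.) -/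

import Mathlib

/-!
Passing from the exact to the rounded sums changes each of `∑ u`, `∑ u x`, `∑ u x²` by at most
`K Δ / 2 = ε₀ U / 2`, which is at most a fraction `δ = ε₀ / 2` of the exact denominator
`D = 1 + ∑ u`, because `U ≤ D`. Such relative errors move the quotients `∑ u x / D` and
`∑ u x² / D` by at most `κ (1 + ν)` and `κ (1 + ν²)`, where `κ = δ / (1 - δ)`. Hence the variance
moves by at most `κ (3 + κ) (1 + ν)²`, and the square root is `1/2`-Hölder with constant `1`.
-/

open Finset

theorem sqrt_max_zero (p : ℝ) : √(max 0 p) = √p := by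
  rw [Real.sqrt_monotone.map_max, Real.sqrt_zero, max_eq_right (Real.sqrt_nonneg p)]

theorem sqrt_le_sqrt_add_sqrt_abs_sub (p q : ℝ) : √p ≤ √q + √|p - q| := by
  refine Real.sqrt_le_iff.2 ⟨by positivity, ?_⟩
  calc p ≤ max q 0 + |p - q| := by linarith [le_abs_self (p - q), le_max_left q 0]
    _ = √q ^ 2 + √|p - q| ^ 2 := by rw [Real.sq_sqrt', Real.sq_sqrt (abs_nonneg _)]
    _ ≤ (√q + √|p - q|) ^ 2 :=
        pow_add_pow_le (Real.sqrt_nonneg _) (Real.sqrt_nonneg _) two_ne_zero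

theorem abs_sqrt_sub_sqrt_le_sqrt_abs_sub (p q : ℝ) : |√p - √q| ≤ √|p - q| := by
  have hpq := sqrt_le_sqrt_add_sqrt_abs_sub p q
  have hqp := sqrt_le_sqrt_add_sqrt_abs_sub q p
  rw [abs_sub_comm q p] at hqp
  exact abs_sub_le_iff.2 ⟨by linarith, by linarith⟩

theorem abs_round_div_mul_sub_le {𝕜 : Type*} [Field 𝕜] [LinearOrder 𝕜] [IsStrictOrderedRing 𝕜]
    [FloorRing 𝕜] (y : 𝕜) {Δ : 𝕜} (hΔ : 0 < Δ) : |round (y / Δ) * Δ - y| ≤ Δ / 2 := by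
  calc |round (y / Δ) * Δ - y| = |(y / Δ - round (y / Δ)) * Δ| := by
        rw [sub_mul, div_mul_cancel₀ y hΔ.ne', abs_sub_comm]
    _ = |y / Δ - round (y / Δ)| * Δ := by rw [abs_mul, abs_of_pos hΔ]
    _ ≤ 1 / 2 * Δ := by gcongr; exact abs_sub_round _
    _ = Δ / 2 := by ring

section Sums

variable {ι R : Type*} [CommRing R] [LinearOrder R] [IsOrderedRing R] {S : Finset ι}

theorem abs_sum_sub_sum_le_card_mul {f g : ι → R} {r : R} (h : ∀ j ∈ S, |f j - g j| ≤ r) :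
    |∑ j ∈ S, f j - ∑ j ∈ S, g j| ≤ #S * r := by
  rw [← sum_sub_distrib, ← nsmul_eq_mul]
  exact (abs_sum_le_sum_abs _ _).trans (sum_le_card_nsmul _ _ _ h)

theorem abs_sum_mul_le_mul_sum {w y : ι → R} {M : R} (hw : ∀ j ∈ S, 0 ≤ w j)
    (hy : ∀ j ∈ S, |y j| ≤ M) : |∑ j ∈ S, w j * y j| ≤ M * ∑ j ∈ S, w j := by
  rw [mul_sum]
  refine (abs_sum_le_sum_abs _ _).trans (sum_le_sum fun j hj => ?_)
  rw [abs_mul, abs_of_nonneg (hw j hj), mul_comm]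
  exact mul_le_mul_of_nonneg_right (hy j hj) (hw j hj)

theorem max_one_sup'_le_one_add_sum (hS : S.Nonempty) {u : ι → R} (hu : ∀ j ∈ S, 0 ≤ u j) :
    max 1 (S.sup' hS u) ≤ 1 + ∑ j ∈ S, u j :=
  max_le (le_add_of_nonneg_right (sum_nonneg hu)) <| sup'_le hS u fun _ hj =>
    (single_le_sum hu hj).trans (le_add_of_nonneg_left zero_le_one)

end Sums

section Variance

variable {R : Type*} [CommRing R] [LinearOrder R] [IsStrictOrderedRing R]

theorem abs_sq_sub_sq_le {b b' ν η : R} (hb : |b| ≤ ν) (hb' : |b' - b| ≤ η) :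
    |b' ^ 2 - b ^ 2| ≤ η * (η + 2 * ν) := by
  have hη : 0 ≤ η := (abs_nonneg _).trans hb'
  have hsum : |b' - b + 2 * b| ≤ η + 2 * ν := by
    refine (abs_add_le _ _).trans ?_
    rw [abs_mul, abs_two]
    gcongr
  calc |b' ^ 2 - b ^ 2| = |b' - b| * |b' - b + 2 * b| := by rw [← abs_mul]; ring_nf
    _ ≤ η * (η + 2 * ν) := by gcongr

theorem abs_sub_sq_sub_sub_sq_le {a a' b b' ν κ : R} (hκ : 0 ≤ κ) (hb : |b| ≤ ν)
    (ha' : |a' - a| ≤ κ * (1 + ν ^ 2)) (hb' : |b' - b| ≤ κ * (1 + ν)) :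
    |(a' - b' ^ 2) - (a - b ^ 2)| ≤ κ * (3 + κ) * (1 + ν) ^ 2 := by
  have hν : 0 ≤ ν := (abs_nonneg b).trans hb
  calc |(a' - b' ^ 2) - (a - b ^ 2)| = |(a' - a) - (b' ^ 2 - b ^ 2)| := by ring_nf
    _ ≤ |a' - a| + |b' ^ 2 - b ^ 2| := abs_sub _ _
    _ ≤ κ * (1 + ν ^ 2) + κ * (1 + ν) * (κ * (1 + ν) + 2 * ν) :=
        add_le_add ha' (abs_sq_sub_sq_le hb hb')
    _ = κ * (3 + κ) * (1 + ν) ^ 2 - κ * (2 + 4 * ν) := by ring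
    _ ≤ κ * (3 + κ) * (1 + ν) ^ 2 := sub_le_self _ (by positivity)

end Variance

section Quotient

variable {𝕜 : Type*} [Field 𝕜] [LinearOrder 𝕜] [IsStrictOrderedRing 𝕜]

theorem abs_div_sub_div_le {A A' D D' δ M : 𝕜} (hD : 0 < D) (hδ : δ < 1) (hA : |A| ≤ M * D)
    (hA' : |A' - A| ≤ δ * D) (hD' : |D' - D| ≤ δ * D) :
    |A' / D' - A / D| ≤ δ / (1 - δ) * (1 + M) := by
  have hδ_pos : 0 < 1 - δ := sub_pos.2 hδ
  have hD'_ge : (1 - δ) * D ≤ D' := by linarith [(abs_le.1 hD').1]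
  have hD'_pos : 0 < D' := (mul_pos hδ_pos hD).trans_le hD'_ge
  have hMD : 0 ≤ M * D := (abs_nonneg A).trans hA
  have hδD : 0 ≤ δ * D := (abs_nonneg _).trans hD'
  have numerator : |(A' - A) * D - A * (D' - D)| ≤ δ * D * (D + M * D) := by
    calc |(A' - A) * D - A * (D' - D)| ≤ |(A' - A) * D| + |A * (D' - D)| := abs_sub _ _
      _ = |A' - A| * D + |A| * |D' - D| := by rw [abs_mul, abs_mul, abs_of_pos hD]
      _ ≤ δ * D * D + M * D * (δ * D) := by gcongr
      _ = δ * D * (D + M * D) := by ring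
  calc |A' / D' - A / D| = |(A' - A) * D - A * (D' - D)| / (D' * D) := by
        rw [div_sub_div _ _ hD'_pos.ne' hD.ne', abs_div, abs_of_pos (mul_pos hD'_pos hD)]
        ring_nf
    _ ≤ δ * D * (D + M * D) / ((1 - δ) * D * D) := by gcongr
    _ = δ / (1 - δ) * (1 + M) := by field_simp

-- Equality holds at `δ = 5 / 6`, where `δ / (1 - δ) = 5`; with `δ = ε₀ / 2` this is where the
-- range `ε₀ ≤ 5 / 3` of `stmt8_general` comes from.
theorem div_one_sub_mul_three_add_le {δ : 𝕜} (hδ : 0 ≤ δ) (hδ' : δ ≤ 5 / 6) :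
    δ / (1 - δ) * (3 + δ / (1 - δ)) ≤ 48 * δ := by
  have hpos : 0 < 1 - δ := by linarith
  have quadratic : 3 - 2 * δ ≤ 48 * (1 - δ) ^ 2 := by nlinarith
  calc δ / (1 - δ) * (3 + δ / (1 - δ)) = δ * ((3 - 2 * δ) / (1 - δ) ^ 2) := by
        field_simp
        ring
    _ ≤ δ * 48 := by gcongr; exact (div_le_iff₀ (pow_pos hpos 2)).2 quadratic
    _ = 48 * δ := mul_comm _ _

end Quotient

theorem abs_sqrt_div_sub_sq_sub_sqrt_le {A A' B B' D D' δ ν : ℝ} (hD : 0 < D) (hδ : δ < 1)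
    (hA : |A| ≤ ν ^ 2 * D) (hB : |B| ≤ ν * D) (hA' : |A' - A| ≤ δ * D)
    (hB' : |B' - B| ≤ δ * D) (hD' : |D' - D| ≤ δ * D) :
    |√(A / D - (B / D) ^ 2) - √(A' / D' - (B' / D') ^ 2)|
      ≤ √(δ / (1 - δ) * (3 + δ / (1 - δ))) * (1 + ν) := by
  have hδ_nonneg : 0 ≤ δ := nonneg_of_mul_nonneg_left ((abs_nonneg _).trans hD') hD
  have hκ : 0 ≤ δ / (1 - δ) := div_nonneg hδ_nonneg (sub_pos.2 hδ).le
  have hν : 0 ≤ ν := nonneg_of_mul_nonneg_left ((abs_nonneg B).trans hB) hD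
  have hBD : |B / D| ≤ ν := by rwa [abs_div, abs_of_pos hD, div_le_iff₀ hD]
  have hvar := abs_sub_sq_sub_sub_sq_le hκ hBD (abs_div_sub_div_le hD hδ hA hA' hD')
    (abs_div_sub_div_le hD hδ hB hB' hD')
  rw [abs_sub_comm]
  calc _ ≤ √|(A' / D' - (B' / D') ^ 2) - (A / D - (B / D) ^ 2)| :=
        abs_sqrt_sub_sqrt_le_sqrt_abs_sub _ _
    _ ≤ √(δ / (1 - δ) * (3 + δ / (1 - δ)) * (1 + ν) ^ 2) := Real.sqrt_le_sqrt hvar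
    _ = √(δ / (1 - δ) * (3 + δ / (1 - δ))) * (1 + ν) := by
        rw [Real.sqrt_mul (by positivity), Real.sqrt_sq (by positivity)]

theorem stmt8_general {ι : Type*} (K : ℕ) (ν : ℝ)
    (S : Finset ι) (hS : S.Nonempty) (hSK : S.card ≤ K)
    (u x : ι → ℝ) (hu : ∀ j ∈ S, 0 ≤ u j) (hx : ∀ j ∈ S, |x j| ≤ ν)
    (ε₀ : ℝ) (hε₀ : ε₀ ∈ Set.Icc (0 : ℝ) (5 / 3))
    (U Δ : ℝ) (hU : U = max 1 (S.sup' hS u)) (hΔ : Δ = ε₀ * U / K)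
    (μ α β : ι → ℝ)
    (hμ : ∀ j ∈ S, |μ j - u j| ≤ Δ / 2)
    (hα : ∀ j ∈ S, |α j - u j * x j| ≤ Δ / 2)
    (hβ : ∀ j ∈ S, |β j - u j * x j ^ 2| ≤ Δ / 2) :
    |√((∑ j ∈ S, u j * x j ^ 2) / (1 + ∑ j ∈ S, u j)
          - ((∑ j ∈ S, u j * x j) / (1 + ∑ j ∈ S, u j)) ^ 2)
        - √(max 0 ((∑ j ∈ S, β j) / (1 + ∑ j ∈ S, μ j)
          - ((∑ j ∈ S, α j) / (1 + ∑ j ∈ S, μ j)) ^ 2))|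
      ≤ √(24 * ε₀) * (1 + ν) := by
  obtain ⟨hε₀_nonneg, hε₀_le⟩ := hε₀
  have hK_pos : (0 : ℝ) < K := by exact_mod_cast hS.card_pos.trans_le hSK
  have hUD : U ≤ 1 + ∑ j ∈ S, u j := hU ▸ max_one_sup'_le_one_add_sum hS hu
  have hU_pos : 0 < U := by rw [hU]; positivity
  have hD : 0 < 1 + ∑ j ∈ S, u j := hU_pos.trans_le hUD
  have total_error : #S * (Δ / 2) ≤ ε₀ / 2 * (1 + ∑ j ∈ S, u j) := by
    calc #S * (Δ / 2) ≤ K * (Δ / 2) := by rw [hΔ]; gcongr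
      _ = ε₀ / 2 * U := by rw [hΔ]; field_simp
      _ ≤ ε₀ / 2 * (1 + ∑ j ∈ S, u j) := by gcongr
  have moment_le {y : ι → ℝ} {M : ℝ} (hM : 0 ≤ M) (hy : ∀ j ∈ S, |y j| ≤ M) :
      |∑ j ∈ S, u j * y j| ≤ M * (1 + ∑ j ∈ S, u j) :=
    (abs_sum_mul_le_mul_sum hu hy).trans (by gcongr; linarith)
  have hν : 0 ≤ ν := hS.elim fun j hj => (abs_nonneg _).trans (hx j hj)
  have hx_sq : ∀ j ∈ S, |x j ^ 2| ≤ ν ^ 2 := fun j hj => by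
    rw [abs_pow]
    exact pow_le_pow_left₀ (abs_nonneg _) (hx j hj) 2
  rw [sqrt_max_zero]
  calc _ ≤ √(ε₀ / 2 / (1 - ε₀ / 2) * (3 + ε₀ / 2 / (1 - ε₀ / 2))) * (1 + ν) :=
        abs_sqrt_div_sub_sq_sub_sqrt_le hD (by linarith)
          (moment_le (sq_nonneg ν) hx_sq) (moment_le hν hx)
          ((abs_sum_sub_sum_le_card_mul hβ).trans total_error)
          ((abs_sum_sub_sum_le_card_mul hα).trans total_error)
          (by rw [add_sub_add_left_eq_sub]
              exact (abs_sum_sub_sum_le_card_mul hμ).trans total_error)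
    _ ≤ √(24 * ε₀) * (1 + ν) := by
        refine mul_le_mul_of_nonneg_right (Real.sqrt_le_sqrt ?_) (by positivity)
        linarith [div_one_sub_mul_three_add_le (δ := ε₀ / 2) (by linarith) (by linarith)]

/-- discretization error bound for the univariate confidence-width term
(second part of Lemma 8 of the paper). -/
theorem stmt8 {ι : Type*} (K : ℕ) (hK : 1 ≤ K) (ν : ℝ) (hν : 0 < ν)
    (S : Finset ι) (hS : S.Nonempty) (hSK : S.card ≤ K)
    (u x : ι → ℝ) (hu : ∀ j ∈ S, 0 ≤ u j) (hx : ∀ j ∈ S, |x j| ≤ ν)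
    (ε₀ : ℝ) (hε₀ : ε₀ ∈ Set.Ioc (0 : ℝ) (1 / 2))
    (U Δ : ℝ) (hU : U = max 1 (S.sup' hS u)) (hΔ : Δ = ε₀ * U / K)
    (μ α β : ι → ℝ)
    (hμ : ∀ j ∈ S, μ j = (round (u j / Δ) : ℝ) * Δ)
    (hα : ∀ j ∈ S, α j = (round (u j * x j / Δ) : ℝ) * Δ)
    (hβ : ∀ j ∈ S, β j = (round (u j * x j ^ 2 / Δ) : ℝ) * Δ) :
    |Real.sqrt ((∑ j ∈ S, u j * x j ^ 2) / (1 + ∑ j ∈ S, u j)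
          - ((∑ j ∈ S, u j * x j) / (1 + ∑ j ∈ S, u j)) ^ 2)
        - Real.sqrt (max 0 ((∑ j ∈ S, β j) / (1 + ∑ j ∈ S, μ j)
          - ((∑ j ∈ S, α j) / (1 + ∑ j ∈ S, μ j)) ^ 2))|
      ≤ Real.sqrt (24 * ε₀) * (1 + ν) := by
  have hU_pos : 0 < U := by rw [hU]; positivity
  have hΔ_pos : 0 < Δ := by rw [hΔ]; have := hε₀.1; positivity
  exact stmt8_general K ν S hS hSK u x hu hx ε₀ ⟨hε₀.1.le, hε₀.2.trans (by norm_num)⟩ U Δ hU hΔ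
    μ α β (fun j hj => hμ j hj ▸ abs_round_div_mul_sub_le _ hΔ_pos)
    (fun j hj => hα j hj ▸ abs_round_div_mul_sub_le _ hΔ_pos)
    (fun j hj => hβ j hj ▸ abs_round_div_mul_sub_le _ hΔ_pos)
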